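/- Let T > 0, (Ω, ℱ, P) a complete probability space with filtration 𝔽 = (ℱ_t)_{t∈[0,T]}, λ Lebesgue measure on [0,T], 𝒢 := {A ∈ ℬ([0,T])⊗ℱ : A_t ∈ ℱ_t for every t ∈ [0,T]}, and ([0,T]×Ω, 𝒢*, μ*) the completion of ([0,T]×Ω, 𝒢, λ×P). Let U ⊆ R^l be a nonempty closed set, L²_𝔽(0,T;R^l) the Banach space of 𝒢-measurable processes with E∫₀^T |y(t)|² dt < ∞, 𝒰_ad := {u ∈ L²_𝔽(0,T;R^l) : u(t,ω) ∈ U for λ×P-a.e. (t,ω)}, ℒ²_𝔽(0,T;R^l) the space of 𝒢*-measurable μ*-square-integrable functions, and 𝒰*_ad := {u ∈ ℒ²_𝔽(0,T;R^l) : u(t,ω) ∈ U for μ*-a.e. (t,ω)}. Let ū ∈ 𝒰_ad, and let F : [0,T]×Ω → R^l be ℬ([0,T])⊗ℱ-measurable, 𝔽-adapted, with E∫₀^T |F(t)|² dt < ∞, satisfying E∫₀^T ⟨F(t), v(t)⟩ dt ≥ 0 for every v ∈ T_{𝒰_ad}(ū) (adjacent cone in L²_𝔽(0,T;R^l)). Then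 ∫_{[0,T]×Ω} ⟨F(t,ω), v*(t,ω)⟩ dμ*(t,ω) ≥ 0 for every v* ∈ T_{𝒰*_ad}(ū), the adjacent cone of 𝒰*_ad at ū in ℒ²_𝔽(0,T;R^l). -/

import Mathlib

/-!
Passing from a σ-algebra to its completion only changes functions on null sets: a function that is
measurable for the completion `𝒢*` has a `𝒢`-measurable version, with the same `L²`-norm and
satisfying the same constraint almost everywhere. Replacing every competitor in `𝒰*_ad` and the
direction `v*` by such versions leaves all `L²`-distances unchanged, so a version `v` of `v*` is
tangent to `𝒰_ad`, and the integrals of `⟨F, v⟩` and `⟨F, v*⟩` coincide.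
-/

open MeasureTheory Filter Set
open scoped ENNReal RealInnerProductSpace

/-- The adjacent cone of a set `K` at a point `x`:
`T_K(x) := {v : lim_{h→0⁺} dist(x+hv, K)/h = 0}`. -/
def adjacentCone {X : Type*} [NormedAddCommGroup X] [NormedSpace ℝ X]
    (K : Set X) (x : X) : Set X :=
  {v | Tendsto (fun h : ℝ => Metric.infDist (x + h • v) K / h)
        (nhdsWithin 0 (Set.Ioi 0)) (nhds 0)}

/-- The progressive σ-algebra
`𝒢 := {A ∈ ℬ([0,T]) ⊗ ℱ : A_t ∈ ℱ_t for every t ∈ [0,T]}` on `[0,T] × Ω`. -/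
def progSigma (T : ℝ) (Ω : Type*) [mΩ : MeasurableSpace Ω]
    (F : ℝ → MeasurableSpace Ω) : MeasurableSpace (Set.Icc (0 : ℝ) T × Ω) where
  MeasurableSet' A := MeasurableSet A ∧
    ∀ t : Set.Icc (0 : ℝ) T, MeasurableSet[F t.1] {ω : Ω | (t, ω) ∈ A}
  measurableSet_empty :=
    ⟨MeasurableSet.empty, fun t => by simp⟩
  measurableSet_compl := fun A hA =>
    ⟨hA.1.compl, fun t => by
      have : {ω : Ω | (t, ω) ∈ Aᶜ} = {ω : Ω | (t, ω) ∈ A}ᶜ := rfl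
      rw [this]; exact (hA.2 t).compl⟩
  measurableSet_iUnion := fun s hs =>
    ⟨MeasurableSet.iUnion fun n => (hs n).1, fun t => by
      have : {ω : Ω | (t, ω) ∈ ⋃ n, s n} = ⋃ n, {ω : Ω | (t, ω) ∈ s n} := by
        ext ω; simp
      rw [this]; exact MeasurableSet.iUnion fun n => (hs n).2 t⟩

lemma progSigma_le (T : ℝ) (Ω : Type*) [mΩ : MeasurableSpace Ω]
    (F : ℝ → MeasurableSpace Ω) :
    progSigma T Ω F ≤ (inferInstance : MeasurableSpace (Set.Icc (0 : ℝ) T × Ω)) :=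
  fun _ hA => hA.1

/-- Lebesgue measure on `[0, T]`, viewed as a subtype of `ℝ`. -/
noncomputable def lebIcc (T : ℝ) : Measure (Set.Icc (0 : ℝ) T) :=
  Measure.comap Subtype.val volume

/-- The measure `λ × P`, regarded as a measure on the progressive σ-algebra `𝒢`. -/
noncomputable def nuG (T : ℝ) (Ω : Type*) [mΩ : MeasurableSpace Ω]
    (F : ℝ → MeasurableSpace Ω) (P : Measure Ω) :
    @Measure (Set.Icc (0 : ℝ) T × Ω) (progSigma T Ω F) :=
  ((lebIcc T).prod P).trim (progSigma_le T Ω F)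

/-- The completion `𝒮*` of a σ-algebra `𝒮` under a measure `μ`: all sets `A` with
`E ⊆ A ⊆ F`, `E, F ∈ 𝒮` and `μ(F \ E) = 0`. -/
def completionSets {α : Type*} (m : MeasurableSpace α) (μ : @Measure α m) :
    Set (Set α) :=
  {A : Set α | ∃ E F : Set α, MeasurableSet[m] E ∧ MeasurableSet[m] F ∧
    E ⊆ A ∧ A ⊆ F ∧ μ (F \ E) = 0}

/-- A function on `[0,T] × Ω` is `𝒢*`-measurable if preimages of Borel sets belong to
the completion `𝒢*` of `𝒢` under `λ × P`. -/
def starMeasurable (T : ℝ) (Ω : Type*) [mΩ : MeasurableSpace Ω]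
    (F : ℝ → MeasurableSpace Ω) (P : Measure Ω) {l : ℕ}
    (u : Set.Icc (0 : ℝ) T × Ω → EuclideanSpace ℝ (Fin l)) : Prop :=
  ∀ B : Set (EuclideanSpace ℝ (Fin l)), MeasurableSet B →
    u ⁻¹' B ∈ completionSets (progSigma T Ω F) (nuG T Ω F P)

/-- The space `ℒ²_𝔽(0,T;ℝ^l)` of `𝒢*`-measurable, `μ*`-square-integrable functions. -/
def L2Star (T : ℝ) (Ω : Type*) [mΩ : MeasurableSpace Ω]
    (F : ℝ → MeasurableSpace Ω) (P : Measure Ω) (l : ℕ) :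
    Set (Set.Icc (0 : ℝ) T × Ω → EuclideanSpace ℝ (Fin l)) :=
  {v | starMeasurable T Ω F P v ∧ eLpNorm v 2 (nuG T Ω F P) < ⊤}

/-- The admissible set `𝒰*_ad := {u ∈ ℒ²_𝔽 : u(t,ω) ∈ U, μ*-a.e.}`. -/
def UadStar (T : ℝ) (Ω : Type*) [mΩ : MeasurableSpace Ω]
    (F : ℝ → MeasurableSpace Ω) (P : Measure Ω) {l : ℕ}
    (U : Set (EuclideanSpace ℝ (Fin l))) :
    Set (Set.Icc (0 : ℝ) T × Ω → EuclideanSpace ℝ (Fin l)) :=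
  {u ∈ L2Star T Ω F P l | ∀ᵐ p ∂(nuG T Ω F P), u p ∈ U}

/-- The adjacent cone, at `u`, of a subset `S` of a function space `W`, with respect
to the `L²(μ)`-distance: `{v ∈ W : lim_{h→0⁺} dist_{L²}(u + h v, S)/h = 0}`. -/
def adjacentConeL2 {α E : Type*} {mα : MeasurableSpace α} (μ : Measure α)
    [NormedAddCommGroup E] [NormedSpace ℝ E]
    (W S : Set (α → E)) (u : α → E) : Set (α → E) :=
  {v ∈ W | Tendsto
    (fun h : ℝ =>
      (⨅ g ∈ S, eLpNorm (fun p => (u p + h • v p) - g p) 2 μ) / ENNReal.ofReal h)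
    (nhdsWithin 0 (Set.Ioi 0)) (nhds 0)}


/-- The space `L²_𝔽(0,T;ℝ^l)` of `𝒢`-measurable processes `y` with
`E ∫₀ᵀ |y(t)|² dt < ∞`, as a set of functions on `[0,T] × Ω`. -/
def L2Adapted (T : ℝ) (Ω : Type*) [mΩ : MeasurableSpace Ω]
    (F : ℝ → MeasurableSpace Ω) (P : Measure Ω) (l : ℕ) :
    Set (Set.Icc (0 : ℝ) T × Ω → EuclideanSpace ℝ (Fin l)) :=
  {y | Measurable[progSigma T Ω F] y ∧ eLpNorm y 2 ((lebIcc T).prod P) < ⊤}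

/-- The admissible set `𝒰_ad := {u ∈ L²_𝔽 : u(t,ω) ∈ U, λ×P-a.e.}`. -/
def Uad (T : ℝ) (Ω : Type*) [mΩ : MeasurableSpace Ω]
    (F : ℝ → MeasurableSpace Ω) (P : Measure Ω) {l : ℕ}
    (U : Set (EuclideanSpace ℝ (Fin l))) :
    Set (Set.Icc (0 : ℝ) T × Ω → EuclideanSpace ℝ (Fin l)) :=
  {u ∈ L2Adapted T Ω F P l | ∀ᵐ p ∂((lebIcc T).prod P), u p ∈ U}

section Completion

variable {α β : Type*} {m : MeasurableSpace α} {μ : Measure α}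

lemma mem_completionSets_iff_nullMeasurableSet {A : Set α} :
    A ∈ completionSets m μ ↔ NullMeasurableSet A μ := by
  constructor
  · rintro ⟨E, G, hE, -, hEA, hAG, hnull⟩
    have hAE : μ (A \ E) = 0 := measure_mono_null (sdiff_subset_sdiff_left hAG) hnull
    simpa only [union_sdiff_cancel hEA] using hE.nullMeasurableSet.union_null hAE
  · intro hA
    obtain ⟨E, hEA, hE, hE_ae⟩ := hA.exists_measurable_subset_ae_eq
    obtain ⟨G, hAG, hG, hG_ae⟩ := hA.exists_measurable_superset_ae_eq
    exact ⟨E, G, hE, hG, hEA, hAG, ae_le_set.1 (hG_ae.trans hE_ae.symm).le⟩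

lemma aemeasurable_iff_forall_preimage_mem_completionSets [MeasurableSpace β]
    [MeasurableSpace.CountablyGenerated β] {f : α → β} :
    AEMeasurable f μ ↔ ∀ B, MeasurableSet B → f ⁻¹' B ∈ completionSets m μ := by
  simp only [mem_completionSets_iff_nullMeasurableSet]
  exact ⟨fun hf _ hB => hf.nullMeasurable hB, fun hf => NullMeasurable.aemeasurable fun _ => hf _⟩

end Completion

section AdjacentCone

variable {α E : Type*} [NormedAddCommGroup E] [NormedSpace ℝ E]

lemma mem_adjacentConeL2_of_ae_eq {_ : MeasurableSpace α} {μ : Measure α}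
    {W W' S S' : Set (α → E)} {u v v' : α → E} (hv : v ∈ adjacentConeL2 μ W S u)
    (hS : ∀ g ∈ S, ∃ g' ∈ S', g =ᵐ[μ] g') (hv' : v' ∈ W') (hvv' : v =ᵐ[μ] v') :
    v' ∈ adjacentConeL2 μ W' S' u := by
  refine ⟨hv', tendsto_of_tendsto_of_tendsto_of_le_of_le tendsto_const_nhds hv.2
    (fun _ => zero_le) fun h => ENNReal.div_le_div_right (le_iInf₂ fun g hg => ?_) _⟩
  obtain ⟨g', hg', hgg'⟩ := hS g hg
  refine iInf₂_le_of_le g' hg' (eLpNorm_congr_ae ?_).le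
  filter_upwards [hvv', hgg'] with p hvp hgp
  rw [hvp, hgp]

lemma adjacentConeL2_trim {m m₀ : MeasurableSpace α} (hm : m ≤ m₀) {μ : Measure[m₀] α}
    {W S : Set (α → E)} {u : α → E} (hu : AEStronglyMeasurable[m] u (μ.trim hm))
    (hW : ∀ v ∈ W, AEStronglyMeasurable[m] v (μ.trim hm))
    (hS : ∀ g ∈ S, AEStronglyMeasurable[m] g (μ.trim hm)) :
    adjacentConeL2 (μ.trim hm) W S u = adjacentConeL2 μ W S u := by
  ext v
  refine and_congr_right fun hv => iff_of_eq ?_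
  congr! 3 with h
  exact iInf_congr fun g => iInf_congr fun hg =>
    eLpNorm_trim_ae hm ((hu.add ((hW v hv).const_smul h)).sub (hS g hg))

end AdjacentCone

/-- The space `L²(m; E)` of `m`-measurable functions that are square integrable for a measure `μ` on
a larger σ-algebra, the abstract form of `L²_𝔽(0,T;ℝ^l)`. It is a set of functions, not of
a.e.-classes: an a.e.-modification of an element need not be `m`-measurable. -/
def measurableL2 {α : Type*} (E : Type*) [NormedAddCommGroup E] (m : MeasurableSpace α)
    {m₀ : MeasurableSpace α} (μ : Measure[m₀] α) : Set (α → E) :=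
  {v | StronglyMeasurable[m] v ∧ MemLp v 2 μ}

section SubSigmaAlgebra

variable {α E : Type*} {m m₀ : MeasurableSpace α} {μ : Measure[m₀] α} [NormedAddCommGroup E]

lemma memLp_two_trim_of_mem_measurableL2 (hm : m ≤ m₀) {v : α → E} (hv : v ∈ measurableL2 E m μ) :
    MemLp v 2 (μ.trim hm) :=
  ⟨hv.1.aestronglyMeasurable, (eLpNorm_trim hm hv.1).trans_lt hv.2.2⟩

lemma exists_mem_measurableL2_ae_eq (hm : m ≤ m₀) {v : α → E} (hv : MemLp v 2 (μ.trim hm)) :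
    ∃ w ∈ measurableL2 E m μ, v =ᵐ[μ.trim hm] w := by
  obtain ⟨w, hw, hvw⟩ := hv.1
  exact ⟨w, ⟨hw, memLp_of_memLp_trim hm ((memLp_congr_ae hvw).1 hv)⟩, hvw⟩

lemma exists_mem_measurableL2_constrained_ae_eq (hm : m ≤ m₀) {U : α → Set E} {u : α → E}
    (hu : MemLp u 2 (μ.trim hm)) (huU : ∀ᵐ p ∂μ.trim hm, u p ∈ U p) :
    ∃ w ∈ {w ∈ measurableL2 E m μ | ∀ᵐ p ∂μ, w p ∈ U p}, u =ᵐ[μ.trim hm] w := by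
  obtain ⟨w, hw, huw⟩ := exists_mem_measurableL2_ae_eq hm hu
  refine ⟨w, ⟨hw, ae_of_ae_trim hm ?_⟩, huw⟩
  filter_upwards [huw, huU] with p hp hpU
  rwa [← hp]

lemma exists_mem_adjacentConeL2_ae_eq [NormedSpace ℝ E] (hm : m ≤ m₀) {U : α → Set E}
    {u v : α → E} (hu : AEStronglyMeasurable[m] u (μ.trim hm))
    (hv : v ∈ adjacentConeL2 (μ.trim hm) {w | MemLp w 2 (μ.trim hm)}
      {w ∈ {w | MemLp w 2 (μ.trim hm)} | ∀ᵐ p ∂μ.trim hm, w p ∈ U p} u) :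
    ∃ w ∈ adjacentConeL2 μ (measurableL2 E m μ)
      {w ∈ measurableL2 E m μ | ∀ᵐ p ∂μ, w p ∈ U p} u, v =ᵐ[μ.trim hm] w := by
  obtain ⟨w, hw, hvw⟩ := exists_mem_measurableL2_ae_eq hm hv.1
  refine ⟨w, ?_, hvw⟩
  rw [← adjacentConeL2_trim hm hu (fun g hg => hg.1.aestronglyMeasurable)
    fun g hg => hg.1.1.aestronglyMeasurable]
  exact mem_adjacentConeL2_of_ae_eq hv
    (fun g hg => exists_mem_measurableL2_constrained_ae_eq hm hg.1 hg.2) hw hvw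

end SubSigmaAlgebra

section InnerProduct

variable {α E : Type*} [NormedAddCommGroup E] [InnerProductSpace ℝ E]

lemma integrable_inner_of_memLp_two {_ : MeasurableSpace α} {μ : Measure α} {f g : α → E}
    (hf : MemLp f 2 μ) (hg : MemLp g 2 μ) : Integrable (fun p => ⟪f p, g p⟫) μ :=
  (hf.norm.integrable_mul hg.norm).mono' (hf.1.inner hg.1)
    (ae_of_all _ fun _ => norm_inner_le_norm _ _)

theorem integral_condition_extends_to_completion_general {m m₀ : MeasurableSpace α} (hm : m ≤ m₀)
    {μ : Measure[m₀] α} {U : α → Set E} {u f : α → E}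
    (hu : AEStronglyMeasurable[m] u (μ.trim hm)) (hf : MemLp f 2 (μ.trim hm))
    (hpos : ∀ v ∈ adjacentConeL2 μ (measurableL2 E m μ)
        {w ∈ measurableL2 E m μ | ∀ᵐ p ∂μ, w p ∈ U p} u,
      0 ≤ ∫ p, ⟪f p, v p⟫ ∂μ) :
    ∀ v ∈ adjacentConeL2 (μ.trim hm) {w | MemLp w 2 (μ.trim hm)}
        {w ∈ {w | MemLp w 2 (μ.trim hm)} | ∀ᵐ p ∂μ.trim hm, w p ∈ U p} u,
      Integrable (fun p => ⟪f p, v p⟫) (μ.trim hm) ∧ 0 ≤ ∫ p, ⟪f p, v p⟫ ∂μ.trim hm := by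
  intro v hv
  have hfv := integrable_inner_of_memLp_two hf hv.1
  obtain ⟨w, hw, hvw⟩ := exists_mem_adjacentConeL2_ae_eq hm hu hv
  have h_inner : ∀ᵐ p ∂μ, ⟪f p, w p⟫ = ⟪f p, v p⟫ := by
    filter_upwards [ae_eq_of_ae_eq_trim hvw] with p hp
    rw [hp]
  refine ⟨hfv, ?_⟩
  calc 0 ≤ ∫ p, ⟪f p, w p⟫ ∂μ := hpos w hw
    _ = ∫ p, ⟪f p, v p⟫ ∂μ := integral_congr_ae h_inner
    _ = ∫ p, ⟪f p, v p⟫ ∂μ.trim hm := integral_trim_ae hm hfv.1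

end InnerProduct

section Progressive

variable {T : ℝ} {Ω : Type*} [mΩ : MeasurableSpace Ω] {F : ℝ → MeasurableSpace Ω}

lemma measurable_progSigma_iff {β : Type*} [MeasurableSpace β]
    {f : Set.Icc (0 : ℝ) T × Ω → β} :
    Measurable[progSigma T Ω F] f ↔
      Measurable f ∧ ∀ t : Set.Icc (0 : ℝ) T, Measurable[F t.1] fun ω => f (t, ω) :=
  ⟨fun hf => ⟨fun _ hB => (hf hB).1, fun t _ hB => (hf hB).2 t⟩,
    fun hf _ hB => ⟨hf.1 hB, fun t => hf.2 t hB⟩⟩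

variable {P : Measure Ω} {l : ℕ}

lemma L2Adapted_eq_measurableL2 :
    L2Adapted T Ω F P l =
      measurableL2 (EuclideanSpace ℝ (Fin l)) (progSigma T Ω F) ((lebIcc T).prod P) := by
  ext v
  refine ⟨fun hv => ?_, fun hv => ⟨hv.1.measurable, hv.2.2⟩⟩
  have hv_sm : StronglyMeasurable[progSigma T Ω F] v := hv.1.stronglyMeasurable
  exact ⟨hv_sm, (hv_sm.mono (progSigma_le T Ω F)).aestronglyMeasurable, hv.2⟩

lemma L2Star_eq_setOf_memLp_two : L2Star T Ω F P l = {v | MemLp v 2 (nuG T Ω F P)} := by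
  ext v
  exact and_congr_left fun _ => aemeasurable_iff_forall_preimage_mem_completionSets.symm.trans
    aestronglyMeasurable_iff_aemeasurable.symm

end Progressive

/-- If the integral necessary condition `E ∫₀ᵀ ⟨F(t), v(t)⟩ dt ≥ 0` holds for every
`v` in the adjacent cone `T_{𝒰_ad}(ū)` (in `L²_𝔽`), then
`∫ ⟨F, v*⟩ dμ* ≥ 0` for every `v*` in the adjacent cone `T_{𝒰*_ad}(ū)` of the
completed admissible set `𝒰*_ad` at `ū` in `ℒ²_𝔽`. -/
theorem integral_condition_extends_to_completion
    (T : ℝ) (hT : 0 < T) {Ω : Type*} [mΩ : MeasurableSpace Ω]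
    (P : Measure Ω) [IsProbabilityMeasure P] (hPc : P.IsComplete)
    (F : ℝ → MeasurableSpace Ω)
    (hFle : ∀ t : ℝ, F t ≤ mΩ)
    (hFmono : ∀ s t : ℝ, s ≤ t → F s ≤ F t)
    {l : ℕ} (U : Set (EuclideanSpace ℝ (Fin l))) (hUcl : IsClosed U)
    (hUne : U.Nonempty)
    (ubar : Set.Icc (0 : ℝ) T × Ω → EuclideanSpace ℝ (Fin l))
    (hubar : ubar ∈ Uad T Ω F P U)
    (Ff : Set.Icc (0 : ℝ) T × Ω → EuclideanSpace ℝ (Fin l))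
    (hFfmeas : Measurable Ff)
    (hFfadapted : ∀ t : Set.Icc (0 : ℝ) T,
      Measurable[F t.1] fun ω : Ω => Ff (t, ω))
    (hFfint : eLpNorm Ff 2 ((lebIcc T).prod P) < ⊤)
    (hpos : ∀ v ∈ adjacentConeL2 ((lebIcc T).prod P)
        (L2Adapted T Ω F P l) (Uad T Ω F P U) ubar,
      0 ≤ ∫ p, ⟪Ff p, v p⟫ ∂((lebIcc T).prod P)) :
    ∀ vstar ∈ adjacentConeL2 (nuG T Ω F P)
        (L2Star T Ω F P l) (UadStar T Ω F P U) ubar,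
      0 ≤ ∫ p, ⟪Ff p, vstar p⟫ ∂(nuG T Ω F P) := by
  have hF : Ff ∈ L2Adapted T Ω F P l :=
    ⟨measurable_progSigma_iff.2 ⟨hFfmeas, hFfadapted⟩, hFfint⟩
  rw [L2Adapted_eq_measurableL2] at hF
  rw [Uad, L2Adapted_eq_measurableL2] at hubar hpos
  rw [UadStar, L2Star_eq_setOf_memLp_two]
  exact fun v hv => (integral_condition_extends_to_completion_general (progSigma_le T Ω F)
    (U := fun _ => U) hubar.1.1.aestronglyMeasurable
    (memLp_two_trim_of_mem_measurableL2 _ hF) hpos v hv).2
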